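/- Let G be a complete multipartite graph with at least 4 vertices and at least one edge, and let G′ be the graph obtained by attaching a 4-cycle to G at an arbitrary edge {i,j} of G. Then the edge polytope 𝒫_{G′} is both type I decomposable and type II decomposable. -/

import Mathlib

/-- For an edge `e = {i,j}` of a graph on `[d]`, `rho e = 𝐞ᵢ + 𝐞ⱼ ∈ ℝ^d`. -/
noncomputable def rho {d : ℕ} (e : Sym2 (Fin d)) : Fin d → ℝ :=
  Sym2.lift ⟨fun i j => Pi.single i 1 + Pi.single j 1, fun _ _ => add_comm _ _⟩ e

/-- The edge polytope of a graph `G` on `[d]`: the convex hull of `{ρ(e) : e ∈ E(G)}`. -/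
noncomputable def edgePolytope {d : ℕ} (G : SimpleGraph (Fin d)) : Set (Fin d → ℝ) :=
  convexHull ℝ (rho '' G.edgeSet)

/-- A set is integral if all its extreme points have integer coordinates. -/
def IsIntegralSet {d : ℕ} (Q : Set (Fin d → ℝ)) : Prop :=
  ∀ x ∈ Q.extremePoints ℝ, ∀ i, ∃ n : ℤ, x i = (n : ℝ)

/-- The hyperplane `{x : ∑ aᵢxᵢ = c}` is a separating hyperplane of `𝒫_G`: it meets
`𝒫_G \ ∂𝒫_G` (the intrinsic interior), and both closed half-space slices are integral. -/
def IsSepHyperplane {d : ℕ} (G : SimpleGraph (Fin d)) (a : Fin d → ℝ) (c : ℝ) : Prop :=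
  a ≠ 0 ∧
  (∃ x ∈ intrinsicInterior ℝ (edgePolytope G), ∑ i, a i * x i = c) ∧
  IsIntegralSet (edgePolytope G ∩ {x | c ≤ ∑ i, a i * x i}) ∧
  IsIntegralSet (edgePolytope G ∩ {x | ∑ i, a i * x i ≤ c})

/-- `𝒫_G` is decomposable if it has a separating hyperplane. -/
def Decomposable {d : ℕ} (G : SimpleGraph (Fin d)) : Prop :=
  ∃ a c, IsSepHyperplane G a c

/-- Type I decomposability: a separating hyperplane through `0` with all `aᵢ ∈ {1,-1}`. -/
def TypeIDecomposable {d : ℕ} (G : SimpleGraph (Fin d)) : Prop :=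
  ∃ a : Fin d → ℝ, (∀ i, a i = 1 ∨ a i = -1) ∧ IsSepHyperplane G a 0

/-- Type II decomposability: a separating hyperplane through `0` with all `aᵢ ∈ {0,1,-1}`,
some `aᵢ = 0`, and no edge with signature `{1,1}` or `{-1,-1}`. -/
def TypeIIDecomposable {d : ℕ} (G : SimpleGraph (Fin d)) : Prop :=
  ∃ a : Fin d → ℝ, (∀ i, a i = 0 ∨ a i = 1 ∨ a i = -1) ∧ (∃ i, a i = 0) ∧
    (∀ i j, G.Adj i j → ¬(a i = 1 ∧ a j = 1) ∧ ¬(a i = -1 ∧ a j = -1)) ∧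
    IsSepHyperplane G a 0

/-- Attaching a 4-cycle to `G` at the edge `{i,j}`: add two new vertices `x₁ = d`, `x₂ = d+1`
and the three edges `{i,x₁}`, `{x₁,x₂}`, `{x₂,j}`. -/
def attachFourCycle {d : ℕ} (G : SimpleGraph (Fin d)) (i j : Fin d) :
    SimpleGraph (Fin (d + 2)) :=
  SimpleGraph.fromEdgeSet
    ((Sym2.map (Fin.castLE (by omega : d ≤ d + 2))) '' G.edgeSet ∪
      {s(Fin.castLE (by omega) i, (⟨d, by omega⟩ : Fin (d + 2))),
       s((⟨d, by omega⟩ : Fin (d + 2)), (⟨d + 1, by omega⟩ : Fin (d + 2))),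
       s((⟨d + 1, by omega⟩ : Fin (d + 2)), Fin.castLE (by omega) j)})

/-- A half-open segment from a point of the intrinsic interior of a convex set to a point of the
set stays in the intrinsic interior. -/
lemma Convex.combo_mem_intrinsicInterior {E : Type*} [NormedAddCommGroup E] [NormedSpace ℝ E]
    {s : Set E} (hs : Convex ℝ s) {x q : E} (hx : x ∈ intrinsicInterior ℝ s) (hq : q ∈ s)
    {α β : ℝ} (hα : 0 < α) (hβ : 0 ≤ β) (hαβ : α + β = 1) :
    α • x + β • q ∈ intrinsicInterior ℝ s := by
  obtain ⟨⟨x, hxs⟩, hx, rfl⟩ := hx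
  rw [mem_interior_iff_mem_nhds, Metric.mem_nhds_iff] at hx
  obtain ⟨ε, hε, hball⟩ := hx
  have hxmem : x ∈ s := hball (Metric.mem_ball_self hε)
  have hp : α • x + β • q ∈ s := hs hxmem hq hα.le hβ hαβ
  refine ⟨⟨α • x + β • q, subset_affineSpan ℝ s hp⟩, ?_, rfl⟩
  rw [mem_interior_iff_mem_nhds, Metric.mem_nhds_iff]
  refine ⟨α * ε, by positivity, ?_⟩
  rintro ⟨y, hys⟩ hy
  rw [Metric.mem_ball, Subtype.dist_eq, dist_eq_norm] at hy
  have hline : AffineMap.lineMap q y α⁻¹ ∈ affineSpan ℝ s :=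
    AffineMap.lineMap_mem _ (subset_affineSpan ℝ s hq) hys
  have hβ' : β = 1 - α := by linarith
  have hdist : AffineMap.lineMap q y α⁻¹ - x = α⁻¹ • (y - (α • x + β • q)) := by
    subst hβ'
    rw [AffineMap.lineMap_apply_module']
    match_scalars <;> field_simp <;> ring
  have hmem : AffineMap.lineMap q y α⁻¹ ∈ s := by
    refine hball (a := ⟨_, hline⟩) ?_
    rw [Metric.mem_ball, Subtype.dist_eq, dist_eq_norm]
    change ‖AffineMap.lineMap q y α⁻¹ - x‖ < ε
    rw [hdist, norm_smul, Real.norm_of_nonneg (by positivity), inv_mul_lt_iff₀ hα]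
    exact hy
  have hcomb : y = α • AffineMap.lineMap q y α⁻¹ + β • q := by
    subst hβ'
    rw [AffineMap.lineMap_apply_module']
    match_scalars <;> field_simp <;> ring
  change y ∈ s
  rw [hcomb]
  exact hs hmem hq hα.le hβ hαβ

/-- A linear functional taking a positive and a negative value on a finite-dimensional convex set
vanishes somewhere on its intrinsic interior. -/
lemma Convex.exists_mem_intrinsicInterior_apply_eq_zero {E : Type*} [NormedAddCommGroup E]
    [NormedSpace ℝ E] [FiniteDimensional ℝ E] {s : Set E} (hs : Convex ℝ s) (l : E →ₗ[ℝ] ℝ)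
    {p q : E} (hp : p ∈ s) (hq : q ∈ s) (hlp : 0 < l p) (hlq : l q < 0) :
    ∃ x ∈ intrinsicInterior ℝ s, l x = 0 := by
  obtain ⟨x, hx⟩ := Set.Nonempty.intrinsicInterior hs ⟨p, hp⟩
  have key : ∀ (m : E →ₗ[ℝ] ℝ) (r : E), r ∈ s → 0 < m x → m r < 0 →
      ∃ y ∈ intrinsicInterior ℝ s, m y = 0 := by
    intro m r hr hmx hmr
    have hpos : 0 < m x - m r := by linarith
    refine ⟨(-m r / (m x - m r)) • x + (m x / (m x - m r)) • r,
      hs.combo_mem_intrinsicInterior hx hr (div_pos (by linarith) hpos) (by positivity) ?_, ?_⟩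
    · field_simp
      ring
    · simp only [map_add, map_smul, smul_eq_mul]
      field_simp
      ring
  rcases lt_trichotomy (l x) 0 with h | h | h
  · obtain ⟨y, hy, hy0⟩ := key (-l) p hp (by simpa using h) (by simpa using hlp)
    exact ⟨y, hy, by simpa using hy0⟩
  · exact ⟨x, hx, h⟩
  · exact key l q hq h hlq

open scoped Pointwise in
/-- Suppose a linear functional `l` takes only the values `0`, `t`, `-t` on `S`, and the sum of a
point of value `t` and one of value `-t` is always a sum of two points of value `0`. Then the slice
`l ≥ 0` of the convex hull of `S` is the convex hull of the points of `S` with `l ≥ 0`. -/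
lemma convexHull_inter_nonneg_subset {E : Type*} [AddCommGroup E] [Module ℝ E] (S : Set E)
    (l : E →ₗ[ℝ] ℝ) {t : ℝ} (ht : 0 < t)
    (hval : ∀ v ∈ S, l v = 0 ∨ l v = t ∨ l v = -t)
    (hpos : ∃ v ∈ S, l v = t) (hneg : ∃ v ∈ S, l v = -t)
    (hex : ∀ v ∈ S, ∀ w ∈ S, l v = t → l w = -t →
      ∃ g ∈ S, ∃ h ∈ S, l g = 0 ∧ l h = 0 ∧ v + w = g + h) :
    convexHull ℝ S ∩ {x | 0 ≤ l x} ⊆ convexHull ℝ {v ∈ S | 0 ≤ l v} := by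
  have hlevel : ∀ c : ℝ, ∀ y ∈ convexHull ℝ {v ∈ S | l v = c}, l y = c := fun c y hy =>
    convexHull_min (t := {x | l x = c}) (fun v hv => hv.2) (convex_hyperplane l.isLinear c) hy
  have hhalf : ∀ y ∈ convexHull ℝ {v ∈ S | l v = t}, ∀ z ∈ convexHull ℝ {v ∈ S | l v = -t},
      ∃ g ∈ convexHull ℝ {v ∈ S | l v = 0}, ∃ h ∈ convexHull ℝ {v ∈ S | l v = 0},
        g + h = y + z := by
    intro y hy z hz
    rw [← Set.mem_add, ← convexHull_add]
    have hyz := Set.add_mem_add hy hz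
    rw [← convexHull_add] at hyz
    refine convexHull_mono ?_ hyz
    rintro _ ⟨v, ⟨hv, hlv⟩, w, ⟨hw, hlw⟩, rfl⟩
    obtain ⟨g, hg, h, hh, hlg, hlh, heq⟩ := hex v hv w hw hlv hlw
    exact ⟨g, ⟨hg, hlg⟩, h, ⟨hh, hlh⟩, heq.symm⟩
  obtain ⟨v, hv, hlv⟩ := hpos
  obtain ⟨w, hw, hlw⟩ := hneg
  obtain ⟨g, hg, -, -, hlg, -, -⟩ := hex v hv w hw hlv hlw
  have hS : S = {v ∈ S | l v = 0} ∪ ({v ∈ S | l v = t} ∪ {v ∈ S | l v = -t}) := by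
    ext u
    have := hval u
    simp only [Set.mem_union, Set.mem_ofPred_eq]
    tauto
  rintro x ⟨hx, hlx⟩
  have hne₀ : {v ∈ S | l v = 0}.Nonempty := ⟨g, hg, hlg⟩
  have hne₁ : {v ∈ S | l v = t}.Nonempty := ⟨v, hv, hlv⟩
  have hne₂ : {v ∈ S | l v = -t}.Nonempty := ⟨w, hw, hlw⟩
  rw [hS, convexHull_union hne₀ hne₁.inl, convexHull_union hne₁ hne₂, mem_convexJoin] at hx
  obtain ⟨o, ho, u, hu, α, β, hα, hβ, hαβ, rfl⟩ := hx
  obtain ⟨y, hy, z, hz, γ, δ, hγ, hδ, hγδ, rfl⟩ := mem_convexJoin.1 hu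
  obtain ⟨g', hg', h', hh', hgh⟩ := hhalf y hy z hz
  have hsub : ∀ c : ℝ, 0 ≤ c →
      convexHull ℝ {v ∈ S | l v = c} ⊆ convexHull ℝ {v ∈ S | 0 ≤ l v} := fun c hc =>
    convexHull_mono fun v hv => ⟨hv.1, hv.2 ▸ hc⟩
  rcases hβ.eq_or_lt with rfl | hβ
  · obtain rfl : α = 1 := by linarith
    simpa using hsub 0 le_rfl ho
  have hle : δ ≤ γ := by
    simp only [Set.mem_ofPred_eq, map_add, map_smul, hlevel _ _ ho, hlevel _ _ hy, hlevel _ _ hz,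
      smul_eq_mul] at hlx
    have : 0 ≤ (β * t) * (γ - δ) := by linarith
    linarith [nonneg_of_mul_nonneg_right this (by positivity)]
  have hconv := convex_convexHull ℝ {v ∈ S | 0 ≤ l v}
  refine hconv (hsub 0 le_rfl ho) ?_ hα hβ.le hαβ
  have hmid : (1 / 2 : ℝ) • g' + (1 / 2 : ℝ) • h' ∈ convexHull ℝ {v ∈ S | 0 ≤ l v} :=
    hconv (hsub 0 le_rfl hg') (hsub 0 le_rfl hh') (by norm_num) (by norm_num) (by norm_num)
  have heq : γ • y + δ • z = (γ - δ) • y + (2 * δ) • ((1 / 2 : ℝ) • g' + (1 / 2 : ℝ) • h') := by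
    rw [← smul_add, hgh]
    module
  rw [heq]
  exact hconv (hsub t ht.le hy) hmid (by linarith) (by linarith) (by linarith)

lemma rho_mk {d : ℕ} (u v : Fin d) : rho s(u, v) = Pi.single u 1 + Pi.single v 1 := rfl

lemma sum_mul_rho {d : ℕ} (a : Fin d → ℝ) (u v : Fin d) :
    ∑ k, a k * rho s(u, v) k = a u + a v := by
  simp [rho_mk, mul_add, Finset.sum_add_distrib, Pi.single_apply]

lemma rho_apply_integer {d : ℕ} (e : Sym2 (Fin d)) (k : Fin d) : ∃ n : ℤ, rho e k = n := by
  induction e with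
  | _ u v =>
    refine ⟨(if k = u then 1 else 0) + (if k = v then 1 else 0), ?_⟩
    simp [rho_mk, Pi.single_apply]

lemma isIntegralSet_nonneg_slice {d : ℕ} (G : SimpleGraph (Fin d)) (a : Fin d → ℝ) {t : ℝ}
    (ht : 0 < t)
    (hval : ∀ u v, G.Adj u v → a u + a v = 0 ∨ a u + a v = t ∨ a u + a v = -t)
    (hpos : ∃ u v, G.Adj u v ∧ a u + a v = t) (hneg : ∃ u v, G.Adj u v ∧ a u + a v = -t)
    (hex : ∀ u v w z, G.Adj u v → G.Adj w z → a u + a v = t → a w + a z = -t →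
      (G.Adj u w ∧ G.Adj v z ∧ a u + a w = 0 ∧ a v + a z = 0) ∨
      (G.Adj u z ∧ G.Adj v w ∧ a u + a z = 0 ∧ a v + a w = 0)) :
    IsIntegralSet (edgePolytope G ∩ {x | 0 ≤ ∑ k, a k * x k}) := by
  let l : (Fin d → ℝ) →ₗ[ℝ] ℝ := dotProductBilin ℝ ℝ a
  have hl : ∀ x, l x = ∑ k, a k * x k := fun x => rfl
  have hedge : ∀ u v, l (rho s(u, v)) = a u + a v := fun u v => sum_mul_rho a u v
  have hmem : ∀ {u v}, G.Adj u v → rho s(u, v) ∈ rho '' G.edgeSet := fun h => ⟨_, h, rfl⟩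
  have hsub := convexHull_inter_nonneg_subset (rho '' G.edgeSet) l ht
    (by
      rintro _ ⟨⟨u, v⟩, he, rfl⟩
      exact (hedge u v).symm ▸ hval u v he)
    (by
      obtain ⟨u, v, h, hs⟩ := hpos
      exact ⟨_, hmem h, (hedge u v).trans hs⟩)
    (by
      obtain ⟨u, v, h, hs⟩ := hneg
      exact ⟨_, hmem h, (hedge u v).trans hs⟩)
    (by
      rintro _ ⟨⟨u, v⟩, he, rfl⟩ _ ⟨⟨w, z⟩, hf, rfl⟩ hlv hlw
      rcases hex u v w z he hf ((hedge u v).symm.trans hlv) ((hedge w z).symm.trans hlw) with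
        ⟨h₁, h₂, h₃, h₄⟩ | ⟨h₁, h₂, h₃, h₄⟩
      · refine ⟨_, hmem h₁, _, hmem h₂, (hedge _ _).trans h₃, (hedge _ _).trans h₄, ?_⟩
        change rho s(u, v) + rho s(w, z) = _
        simp only [rho_mk]
        abel
      · refine ⟨_, hmem h₁, _, hmem h₂, (hedge _ _).trans h₃, (hedge _ _).trans h₄, ?_⟩
        change rho s(u, v) + rho s(w, z) = _
        simp only [rho_mk]
        abel)
  intro x hx
  have hx' : x ∈ (convexHull ℝ {v ∈ rho '' G.edgeSet | 0 ≤ l v}).extremePoints ℝ := by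
    refine inter_extremePoints_subset_extremePoints_of_subset ?_ ⟨hsub hx.1, hx⟩
    exact Set.subset_inter (convexHull_mono fun v hv => hv.1)
      (convexHull_min (fun v hv => hv.2) (convex_halfSpace_ge l.isLinear 0))
  obtain ⟨⟨e, -, rfl⟩, -⟩ := extremePoints_convexHull_subset hx'
  exact rho_apply_integer e

/-- If all edges have weight `0`, `t` or `-t`, both nonzero weights occur, and any edge of weight
`t` can be exchanged with any edge of weight `-t` for two edges of weight `0` on the same four
vertices, then the hyperplane with coefficients `a` is separating. -/
lemma isSepHyperplane_of_exchange {d : ℕ} (G : SimpleGraph (Fin d)) (a : Fin d → ℝ) {t : ℝ}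
    (ht : 0 < t)
    (hval : ∀ u v, G.Adj u v → a u + a v = 0 ∨ a u + a v = t ∨ a u + a v = -t)
    (hpos : ∃ u v, G.Adj u v ∧ a u + a v = t) (hneg : ∃ u v, G.Adj u v ∧ a u + a v = -t)
    (hex : ∀ u v w z, G.Adj u v → G.Adj w z → a u + a v = t → a w + a z = -t →
      (G.Adj u w ∧ G.Adj v z ∧ a u + a w = 0 ∧ a v + a z = 0) ∨
      (G.Adj u z ∧ G.Adj v w ∧ a u + a z = 0 ∧ a v + a w = 0)) :
    IsSepHyperplane G a 0 := by
  refine ⟨?_, ?_, isIntegralSet_nonneg_slice G a ht hval hpos hneg hex, ?_⟩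
  · rintro rfl
    obtain ⟨u, v, -, h⟩ := hpos
    simp only [Pi.zero_apply] at h
    linarith
  · obtain ⟨u, v, h, hs⟩ := hpos
    obtain ⟨w, z, h', hs'⟩ := hneg
    have hu := sum_mul_rho a u v
    have hw := sum_mul_rho a w z
    exact (convex_convexHull ℝ _).exists_mem_intrinsicInterior_apply_eq_zero
      (dotProductBilin ℝ ℝ a)
      (subset_convexHull ℝ _ ⟨s(u, v), h, rfl⟩) (subset_convexHull ℝ _ ⟨s(w, z), h', rfl⟩)
      (lt_of_lt_of_eq ht (hu.trans hs).symm)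
      (lt_of_eq_of_lt (hw.trans hs') (by linarith))
  · have hset : {x : Fin d → ℝ | ∑ k, a k * x k ≤ 0} = {x | 0 ≤ ∑ k, (-a) k * x k} := by
      ext x
      simp
    rw [hset]
    refine isIntegralSet_nonneg_slice G (-a) ht (fun u v h => ?_) ?_ ?_ ?_
    · simp only [Pi.neg_apply]
      rcases hval u v h with h | h | h
      · left; linarith
      · right; right; linarith
      · right; left; linarith
    · obtain ⟨u, v, h, hs⟩ := hneg
      exact ⟨u, v, h, by simp only [Pi.neg_apply]; linarith⟩
    · obtain ⟨u, v, h, hs⟩ := hpos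
      exact ⟨u, v, h, by simp only [Pi.neg_apply]; linarith⟩
    · intro u v w z h h' hs hs'
      simp only [Pi.neg_apply] at hs hs' ⊢
      rcases hex w z u v h' h (by linarith) (by linarith) with
        ⟨h₁, h₂, h₃, h₄⟩ | ⟨h₁, h₂, h₃, h₄⟩
      · exact Or.inl ⟨h₁.symm, h₂.symm, by linarith, by linarith⟩
      · exact Or.inr ⟨h₂.symm, h₁.symm, by linarith, by linarith⟩

/-- Adjacency in `attachFourCycle G i j`, in terms of the underlying natural numbers. -/
lemma attachFourCycle_adj {d : ℕ} (G : SimpleGraph (Fin d)) (i j : Fin d) (u v : Fin (d + 2)) :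
    (attachFourCycle G i j).Adj u v ↔
      (∃ u' v' : Fin d, G.Adj u' v' ∧ u.val = u'.val ∧ v.val = v'.val) ∨
      (u.val = i.val ∧ v.val = d) ∨ (u.val = d ∧ v.val = i.val) ∨
      (u.val = d ∧ v.val = d + 1) ∨ (u.val = d + 1 ∧ v.val = d) ∨
      (u.val = d + 1 ∧ v.val = j.val) ∨ (u.val = j.val ∧ v.val = d + 1) := by
  have hG : s(u, v) ∈ Sym2.map (Fin.castLE (by omega : d ≤ d + 2)) '' G.edgeSet ↔
      ∃ u' v' : Fin d, G.Adj u' v' ∧ u.val = u'.val ∧ v.val = v'.val := by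
    constructor
    · rintro ⟨⟨x, y⟩, hxy, h⟩
      replace h : s(Fin.castLE _ x, Fin.castLE _ y) = s(u, v) := h
      rw [Sym2.eq_iff] at h
      rcases h with ⟨rfl, rfl⟩ | ⟨rfl, rfl⟩
      · exact ⟨x, y, hxy, rfl, rfl⟩
      · exact ⟨y, x, SimpleGraph.Adj.symm hxy, rfl, rfl⟩
    · rintro ⟨u', v', h, hu, hv⟩
      refine ⟨s(u', v'), h, ?_⟩
      change s(Fin.castLE _ u', Fin.castLE _ v') = s(u, v)
      rw [Sym2.eq_iff]
      exact Or.inl ⟨Fin.ext hu.symm, Fin.ext hv.symm⟩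
  have hi := i.isLt
  have hj := j.isLt
  rw [attachFourCycle, SimpleGraph.fromEdgeSet_adj, Set.mem_union, hG]
  simp only [Set.mem_insert_iff, Set.mem_singleton_iff, Sym2.eq_iff, Fin.ext_iff, Fin.val_castLE,
    ne_eq]
  constructor
  · rintro ⟨h | h, -⟩
    · exact Or.inl h
    · omega
  · rintro (⟨u', v', h, hu, hv⟩ | h)
    · refine ⟨Or.inl ⟨u', v', h, hu, hv⟩, fun huv => h.ne (Fin.ext ?_)⟩
      omega
    · exact ⟨by right; omega, by omega⟩

/-- In a complete multipartite graph, two edges can always be exchanged for two edges joining an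
endpoint of the first to an endpoint of the second. -/
lemma exchange_of_multipartite {V : Type*} {G : SimpleGraph V} {p : V → ℕ}
    (hp : ∀ i j, G.Adj i j ↔ p i ≠ p j) {u v w z : V} (h : G.Adj u v) (h' : G.Adj w z) :
    (G.Adj u w ∧ G.Adj v z) ∨ (G.Adj u z ∧ G.Adj v w) := by
  simp only [hp] at *
  omega

lemma attachFourCycle_typeI {d : ℕ} (G : SimpleGraph (Fin d))
    (hmp : ∃ p : Fin d → ℕ, ∀ i j, G.Adj i j ↔ p i ≠ p j) (i j : Fin d) (hij : G.Adj i j) :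
    TypeIDecomposable (attachFourCycle G i j) := by
  obtain ⟨p, hp⟩ := hmp
  have hi := i.isLt
  have hj := j.isLt
  have hne : i.val ≠ j.val := fun h => hij.ne (Fin.ext h)
  let a : Fin (d + 2) → ℝ := fun k => if k.val = i.val ∨ k.val = j.val then -1 else 1
  have ha₁ : ∀ k, (k.val = i.val ∨ k.val = j.val) → a k = -1 := fun k h => if_pos h
  have ha₂ : ∀ k, ¬(k.val = i.val ∨ k.val = j.val) → a k = 1 := fun k h => if_neg h
  have ha : ∀ k, a k = 1 ∨ a k = -1 := fun k => by
    by_cases h : k.val = i.val ∨ k.val = j.val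
    · exact Or.inr (ha₁ k h)
    · exact Or.inl (ha₂ k h)
  have hone : ∀ k, a k = 1 → ¬(k.val = i.val ∨ k.val = j.val) := fun k h h' => by
    linarith [ha₁ k h']
  have hmone : ∀ k, a k = -1 → k.val = i.val ∨ k.val = j.val := fun k h => by
    by_contra h'
    linarith [ha₂ k h']
  refine ⟨a, ha, isSepHyperplane_of_exchange _ a (t := 2) two_pos ?_ ?_ ?_ ?_⟩
  · intro u v _
    rcases ha u with hu | hu <;> rcases ha v with hv | hv <;> rw [hu, hv] <;> norm_num
  · refine ⟨⟨d, by omega⟩, ⟨d + 1, by omega⟩, ?_, ?_⟩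
    · rw [attachFourCycle_adj]
      simp
    · rw [ha₂ _ (by simp only; omega), ha₂ _ (by simp only; omega)]
      norm_num
  · refine ⟨⟨i, by omega⟩, ⟨j, by omega⟩, ?_, ?_⟩
    · rw [attachFourCycle_adj]
      exact Or.inl ⟨i, j, hij, rfl, rfl⟩
    · rw [ha₁ _ (by simp), ha₁ _ (by simp)]
      norm_num
  · intro u v w z huv hwz hs hs'
    have hu : a u = 1 := by rcases ha u with h | h <;> rcases ha v with h' | h' <;> linarith
    have hv : a v = 1 := by linarith
    have hw : a w = -1 := by rcases ha w with h | h <;> rcases ha z with h' | h' <;> linarith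
    have hz : a z = -1 := by linarith
    simp only [hu, hv, hw, hz, add_neg_cancel, and_true]
    have hu' := hone u hu
    have hv' := hone v hv
    have hw' := hmone w hw
    have hz' := hmone z hz
    have hwz' : w.val ≠ z.val := fun h => hwz.ne (Fin.ext h)
    rw [attachFourCycle_adj] at huv hwz
    rcases hwz with ⟨w', z', hwz, hww, hzz⟩ | h
    swap
    · omega
    rcases huv with ⟨u', v', huv, huu, hvv⟩ | h
    · rcases exchange_of_multipartite hp huv hwz with ⟨h₁, h₂⟩ | ⟨h₁, h₂⟩
      · left
        exact ⟨(attachFourCycle_adj ..).2 (Or.inl ⟨_, _, h₁, huu, hww⟩),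
          (attachFourCycle_adj ..).2 (Or.inl ⟨_, _, h₂, hvv, hzz⟩)⟩
      · right
        exact ⟨(attachFourCycle_adj ..).2 (Or.inl ⟨_, _, h₁, huu, hzz⟩),
          (attachFourCycle_adj ..).2 (Or.inl ⟨_, _, h₂, hvv, hww⟩)⟩
    · have hcross : (u.val = d ∧ v.val = d + 1) ∨ (u.val = d + 1 ∧ v.val = d) := by omega
      have hends : (w.val = i.val ∧ z.val = j.val) ∨ (w.val = j.val ∧ z.val = i.val) := by omega
      simp only [attachFourCycle_adj]
      rcases hcross with ⟨hu, hv⟩ | ⟨hu, hv⟩ <;> rcases hends with ⟨hw, hz⟩ | ⟨hw, hz⟩ <;>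
        simp [hu, hv, hw, hz]

lemma attachFourCycle_typeII {d : ℕ} (G : SimpleGraph (Fin d)) (i j : Fin d)
    (hij : G.Adj i j) : TypeIIDecomposable (attachFourCycle G i j) := by
  have hi := i.isLt
  have hj := j.isLt
  let a : Fin (d + 2) → ℝ := fun k => if k.val = d then 1 else if k.val = d + 1 then -1 else 0
  have ha₁ : ∀ k, k.val = d → a k = 1 := fun k h => if_pos h
  have ha₂ : ∀ k, k.val = d + 1 → a k = -1 := fun k h => by
    simp [a, h]
  have ha₀ : ∀ k, k.val < d → a k = 0 := fun k h => by
    simp [a, show k.val ≠ d by omega, show k.val ≠ d + 1 by omega]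
  have hcases : ∀ k : Fin (d + 2),
      (k.val < d ∧ a k = 0) ∨ (k.val = d ∧ a k = 1) ∨ (k.val = d + 1 ∧ a k = -1) := fun k => by
    have := k.isLt
    rcases (by omega : k.val < d ∨ k.val = d ∨ k.val = d + 1) with h | h | h
    · exact Or.inl ⟨h, ha₀ k h⟩
    · exact Or.inr (Or.inl ⟨h, ha₁ k h⟩)
    · exact Or.inr (Or.inr ⟨h, ha₂ k h⟩)
  have hone : ∀ k, a k = 1 → k.val = d := fun k h => by
    rcases hcases k with h' | h' | h' <;> first | exact h'.1 | linarith [h'.2]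
  have hmone : ∀ k, a k = -1 → k.val = d + 1 := fun k h => by
    rcases hcases k with h' | h' | h' <;> first | exact h'.1 | linarith [h'.2]
  have hadj : ∀ u v, (attachFourCycle G i j).Adj u v →
      (a u + a v = 0) ∨
      (a u + a v = 1 ∧ ((u.val = i.val ∧ v.val = d) ∨ (u.val = d ∧ v.val = i.val))) ∨
      (a u + a v = -1 ∧ ((u.val = d + 1 ∧ v.val = j.val) ∨
        (u.val = j.val ∧ v.val = d + 1))) := by
    intro u v h
    rw [attachFourCycle_adj] at h
    rcases h with ⟨u', v', -, hu, hv⟩ | h | h | h | h | h | h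
    · left
      rw [ha₀ u (by omega), ha₀ v (by omega), add_zero]
    · right; left
      exact ⟨by rw [ha₀ u (by omega), ha₁ v h.2, zero_add], Or.inl h⟩
    · right; left
      exact ⟨by rw [ha₀ v (by omega), ha₁ u h.1, add_zero], Or.inr h⟩
    · left
      rw [ha₁ u h.1, ha₂ v h.2, add_neg_cancel]
    · left
      rw [ha₂ u h.1, ha₁ v h.2, neg_add_cancel]
    · right; right
      exact ⟨by rw [ha₂ u h.1, ha₀ v (by omega), add_zero], Or.inl h⟩
    · right; right
      exact ⟨by rw [ha₂ v h.2, ha₀ u (by omega), zero_add], Or.inr h⟩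
  have hbase : ∀ u v : Fin (d + 2), ((u.val = i.val ∧ v.val = j.val) ∨
      (u.val = j.val ∧ v.val = i.val)) → (attachFourCycle G i j).Adj u v ∧ a u + a v = 0 := by
    rintro u v (⟨hu, hv⟩ | ⟨hu, hv⟩) <;>
      refine ⟨(attachFourCycle_adj ..).2 (Or.inl ?_), ?_⟩
    · exact ⟨i, j, hij, hu, hv⟩
    · rw [ha₀ u (by omega), ha₀ v (by omega), add_zero]
    · exact ⟨j, i, hij.symm, hu, hv⟩
    · rw [ha₀ u (by omega), ha₀ v (by omega), add_zero]
  have hnew : ∀ u v : Fin (d + 2), ((u.val = d ∧ v.val = d + 1) ∨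
      (u.val = d + 1 ∧ v.val = d)) → (attachFourCycle G i j).Adj u v ∧ a u + a v = 0 := by
    rintro u v (⟨hu, hv⟩ | ⟨hu, hv⟩) <;>
      refine ⟨(attachFourCycle_adj ..).2 (by omega), ?_⟩
    · rw [ha₁ u hu, ha₂ v hv, add_neg_cancel]
    · rw [ha₂ u hu, ha₁ v hv, neg_add_cancel]
  refine ⟨a, fun k => ?_, ⟨⟨i, by omega⟩, ha₀ _ hi⟩, fun u v h => ⟨?_, ?_⟩,
    isSepHyperplane_of_exchange _ a (t := 1) one_pos ?_ ?_ ?_ ?_⟩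
  · have := hcases k
    tauto
  · rintro ⟨hu, hv⟩
    exact h.ne (Fin.ext ((hone u hu).trans (hone v hv).symm))
  · rintro ⟨hu, hv⟩
    exact h.ne (Fin.ext ((hmone u hu).trans (hmone v hv).symm))
  · intro u v h
    have := hadj u v h
    tauto
  · refine ⟨⟨i, by omega⟩, ⟨d, by omega⟩, (attachFourCycle_adj ..).2 (by simp), ?_⟩
    rw [ha₀ _ hi, ha₁ _ rfl, zero_add]
  · refine ⟨⟨d + 1, by omega⟩, ⟨j, by omega⟩, (attachFourCycle_adj ..).2 (by simp), ?_⟩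
    rw [ha₀ ⟨j, _⟩ hj, ha₂ _ rfl, add_zero]
  · intro u v w z huv hwz hs hs'
    have huv' : (u.val = i.val ∧ v.val = d) ∨ (u.val = d ∧ v.val = i.val) := by
      rcases hadj u v huv with h | h | h
      · linarith
      · exact h.2
      · linarith [h.1]
    have hwz' : (w.val = d + 1 ∧ z.val = j.val) ∨ (w.val = j.val ∧ z.val = d + 1) := by
      rcases hadj w z hwz with h | h | h
      · linarith
      · linarith [h.1]
      · exact h.2
    rcases huv' with ⟨hu, hv⟩ | ⟨hu, hv⟩ <;> rcases hwz' with ⟨hw, hz⟩ | ⟨hw, hz⟩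
    · obtain ⟨h₁, h₃⟩ := hbase u z (Or.inl ⟨hu, hz⟩)
      obtain ⟨h₂, h₄⟩ := hnew v w (Or.inl ⟨hv, hw⟩)
      exact Or.inr ⟨h₁, h₂, h₃, h₄⟩
    · obtain ⟨h₁, h₃⟩ := hbase u w (Or.inl ⟨hu, hw⟩)
      obtain ⟨h₂, h₄⟩ := hnew v z (Or.inl ⟨hv, hz⟩)
      exact Or.inl ⟨h₁, h₂, h₃, h₄⟩
    · obtain ⟨h₁, h₃⟩ := hnew u w (Or.inl ⟨hu, hw⟩)
      obtain ⟨h₂, h₄⟩ := hbase v z (Or.inl ⟨hv, hz⟩)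
      exact Or.inl ⟨h₁, h₂, h₃, h₄⟩
    · obtain ⟨h₁, h₃⟩ := hnew u z (Or.inl ⟨hu, hz⟩)
      obtain ⟨h₂, h₄⟩ := hbase v w (Or.inl ⟨hv, hw⟩)
      exact Or.inr ⟨h₁, h₂, h₃, h₄⟩

/-- Let `G` be a complete multipartite graph on `[d]`, `d ≥ 4`, with at least
one edge `{i,j}`, and let `G'` be obtained by attaching a 4-cycle to `G` at `{i,j}`. Then
`𝒫_{G'}` is both type I and type II decomposable. -/
theorem attachFourCycle_multipartite_typeI_typeII {d : ℕ} (G : SimpleGraph (Fin d))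
    (hd : 4 ≤ d) (hmp : ∃ p : Fin d → ℕ, ∀ i j, G.Adj i j ↔ p i ≠ p j)
    (i j : Fin d) (hij : G.Adj i j) :
    TypeIDecomposable (attachFourCycle G i j) ∧
      TypeIIDecomposable (attachFourCycle G i j) :=
  ⟨attachFourCycle_typeI G hmp i j hij, attachFourCycle_typeII G i j hij⟩
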